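/- For every α > 2 there exist constants C > 0 and L₀ > 2 such that for every L ≥ L₀ and every x = (x₁,x₂,a) ∈ G with r(x) ≥ (log L)^α, the function f_L = χ_{R_L} − χ_{R₀} satisfies sup_{t>0} |f_L ∗ p_t(x)| ≤ C (L³/a²) · r(x)⁻² · (sinh r(x))⁻² · (L + |x|). -/

import Mathlib

open MeasureTheory Real Filter Set
open scoped ENNReal

noncomputable section

/-- The group `G = ℝ² ⋊ ℝ⁺`, realized as triples `(x₁, x₂, a)` (only `a > 0` is relevant). -/
abbrev G : Type := ℝ × ℝ × ℝ

/-- Group product `(x₁,x₂,a)·(x₁',x₂',a') = (x₁+a x₁', x₂+a x₂', a a')`. -/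
def gMul (x y : G) : G := (x.1 + x.2.2 * y.1, x.2.1 + x.2.2 * y.2.1, x.2.2 * y.2.2)

/-- Group inverse `(x₁,x₂,a)⁻¹ = (−x₁/a, −x₂/a, 1/a)`. -/
def gInv (x : G) : G := (-x.1 / x.2.2, -x.2.1 / x.2.2, 1 / x.2.2)

/-- The identity `e = (0,0,1)`. -/
def gE : G := (0, 0, 1)

/-- The right Haar measure `dρ = a⁻¹ dx₁ dx₂ da` (supported where `a > 0`). -/
def ρG : Measure G :=
  (volume : Measure G).withDensity fun x => ENNReal.ofReal (if 0 < x.2.2 then x.2.2⁻¹ else 0)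

/-- The modular function `δ(x₁,x₂,a) = a⁻²`. -/
def deltaG (x : G) : ℝ := (x.2.2 ^ 2)⁻¹

/-- `|x| = √(x₁² + x₂²)`. -/
def normG (x : G) : ℝ := Real.sqrt (x.1 ^ 2 + x.2.1 ^ 2)

/-- `cosh r(x) = (a + a⁻¹ + a⁻¹|x|²)/2`. -/
def coshArg (x : G) : ℝ := (x.2.2 + x.2.2⁻¹ + x.2.2⁻¹ * (x.1 ^ 2 + x.2.1 ^ 2)) / 2

/-- `r(x) ≥ 0` is determined by `cosh r(x) = coshArg x`; explicitly `r = arcosh (coshArg x)`. -/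
def rG (x : G) : ℝ := Real.log (coshArg x + Real.sqrt (coshArg x ^ 2 - 1))

/-- The left-invariant distance `d(x,y) = r(x⁻¹y)`. -/
def dG (x y : G) : ℝ := rG (gMul (gInv x) y)

/-- The heat kernel
`p_t(x) = (8π^{3/2})⁻¹ δ(x)^{1/2} (r(x)/sinh r(x)) t^{−3/2} exp(−r(x)²/(4t))`,
with `r/sinh r := 1` at `x = e`. -/
def heatK (t : ℝ) (x : G) : ℝ :=
  (8 * Real.pi ^ ((3 : ℝ)/2))⁻¹ * Real.sqrt (deltaG x) *
    (if rG x = 0 then 1 else rG x / Real.sinh (rG x)) *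
    t ^ (-(3 : ℝ)/2) * Real.exp (-(rG x ^ 2) / (4 * t))

/-- Convolution `f ∗ p_t(x) = ∫ f(xy⁻¹) p_t(y) dρ(y)`. -/
def convHeat (f : G → ℝ) (t : ℝ) (x : G) : ℝ := ∫ y, f (gMul x (gInv y)) * heatK t y ∂ρG

/-- The heat maximal operator `Mf(x) = sup_{t>0} |f ∗ p_t(x)|` (valued in `ℝ≥0∞`). -/
def maxHeat (f : G → ℝ) (x : G) : ℝ≥0∞ :=
  ⨆ (t : ℝ) (_ : 0 < t), ENNReal.ofReal |convHeat f t x|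

/-- Calderón–Zygmund sets. -/
def IsCZ (R : Set G) : Prop :=
  ∃ c : G, ∃ L r : ℝ, 0 < c.2.2 ∧ 0 < L ∧ 0 < r ∧
    R = Set.Icc (c.1 - L/2) (c.1 + L/2) ×ˢ
        (Set.Icc (c.2.1 - L/2) (c.2.1 + L/2) ×ˢ
         Set.Icc (c.2.2 * Real.exp (-r)) (c.2.2 * Real.exp r)) ∧
    (r < 1 → Real.exp 2 * c.2.2 * r ≤ L ∧ L < Real.exp 8 * c.2.2 * r) ∧
    (1 ≤ r → c.2.2 * Real.exp (2*r) ≤ L ∧ L < c.2.2 * Real.exp (8*r))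

/-- Atoms: `A ∈ L¹(ρ)` supported in a Calderón–Zygmund set `R`, with
`‖A‖_∞ ≤ ρ(R)⁻¹` and `∫ A dρ = 0`. -/
def IsAtomG (A : G → ℝ) : Prop :=
  Integrable A ρG ∧
  ∃ R : Set G, IsCZ R ∧ (∀ x ∉ R, A x = 0) ∧
    eLpNorm A ⊤ ρG ≤ (ρG R)⁻¹ ∧
    ∫ x, A x ∂ρG = 0

/-- `f = Σ_j lam_j A_j` with atoms `A_j`, `Σ_j |lam_j| < ∞`, converging in `L¹(ρ)`. -/
def IsH1Decomp (f : G → ℝ) (lam : ℕ → ℝ) (A : ℕ → G → ℝ) : Prop :=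
  (∀ j, IsAtomG (A j)) ∧ Summable (fun j => |lam j|) ∧
  Tendsto (fun N => eLpNorm (fun x => f x - ∑ j ∈ Finset.range N, lam j * A j x) 1 ρG)
    atTop (nhds 0)

/-- The Hardy space `H¹`. -/
def MemH1 (f : G → ℝ) : Prop :=
  Integrable f ρG ∧ ∃ lam A, IsH1Decomp f lam A

/-- `‖f‖_{H¹} = inf Σ_j |lam_j|` over all atomic decompositions. -/
def H1norm (f : G → ℝ) : ℝ :=
  sInf {s | ∃ lam A, IsH1Decomp f lam A ∧ s = ∑' j, |lam j|}

/-- The left-invariant vector field `X₀ = a ∂_a`. -/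
def X0 (f : G → ℝ) (x : G) : ℝ := x.2.2 * deriv (fun s => f (x.1, x.2.1, s)) x.2.2

/-- The left-invariant vector field `X₁ = a ∂_{x₁}`. -/
def X1 (f : G → ℝ) (x : G) : ℝ := x.2.2 * deriv (fun s => f (s, x.2.1, x.2.2)) x.1

/-- The left-invariant vector field `X₂ = a ∂_{x₂}`. -/
def X2 (f : G → ℝ) (x : G) : ℝ := x.2.2 * deriv (fun s => f (x.1, s, x.2.2)) x.2.1

/-- `‖∇p_t(x)‖`, the Euclidean norm of `(X₀p_t, X₁p_t, X₂p_t)` at `x`. -/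
def gradHeatNorm (t : ℝ) (x : G) : ℝ :=
  Real.sqrt (X0 (heatK t) x ^ 2 + X1 (heatK t) x ^ 2 + X2 (heatK t) x ^ 2)

/-- The Poisson kernel `q_t(x) = π⁻² δ(x)^{1/2} (r(x)/sinh r(x)) · t/(t²+r(x)²)²`. -/
def poissonK (t : ℝ) (x : G) : ℝ :=
  (Real.pi ^ 2)⁻¹ * Real.sqrt (deltaG x) *
    (if rG x = 0 then 1 else rG x / Real.sinh (rG x)) *
    (t / (t ^ 2 + rG x ^ 2) ^ 2)

/-- Convolution `f ∗ q_t(x) = ∫ f(xy⁻¹) q_t(y) dρ(y)`. -/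
def convPoisson (f : G → ℝ) (t : ℝ) (x : G) : ℝ := ∫ y, f (gMul x (gInv y)) * poissonK t y ∂ρG

/-- The Poisson maximal operator `M̃f(x) = sup_{t>0} |f ∗ q_t(x)|`. -/
def maxPoisson (f : G → ℝ) (x : G) : ℝ≥0∞ :=
  ⨆ (t : ℝ) (_ : 0 < t), ENNReal.ofReal |convPoisson f t x|

/-- `G_{r₁}(x) = sup_{z ∈ B(x,r₁/2)} sup_{t>0} ‖∇p_t(z)‖`. -/
def Gsup (r1 : ℝ) (x : G) : ℝ≥0∞ :=
  ⨆ (z : G) (_ : 0 < z.2.2 ∧ dG x z < r1 / 2) (t : ℝ) (_ : 0 < t),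
    ENNReal.ofReal (gradHeatNorm t z)

/-- `R₀ = [−1,1]×[−1,1]×[e⁻¹,e]`. -/
def R0set : Set G :=
  Set.Icc (-1 : ℝ) 1 ×ˢ (Set.Icc (-1 : ℝ) 1 ×ˢ Set.Icc (Real.exp (-1)) (Real.exp 1))

/-- `R_L = [L−1,L+1]×[−1,1]×[e⁻¹,e]`. -/
def RLset (L : ℝ) : Set G :=
  Set.Icc (L - 1) (L + 1) ×ˢ (Set.Icc (-1 : ℝ) 1 ×ˢ Set.Icc (Real.exp (-1)) (Real.exp 1))

/-- `f_L = χ_{R_L} − χ_{R₀}`. -/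
def fL (L : ℝ) : G → ℝ := fun x =>
  (RLset L).indicator (fun _ => (1 : ℝ)) x - R0set.indicator (fun _ => (1 : ℝ)) x

/-- The mean of `g` over `R` with respect to `ρ`. -/
def czMean (g : G → ℝ) (R : Set G) : ℝ := (∫ x in R, g x ∂ρG) / (ρG R).toReal

/-- `‖g‖_{BMO} = sup_R ρ(R)⁻¹ ∫_R |g − g_R| dρ` over Calderón–Zygmund sets `R`. -/
def czBMO (g : G → ℝ) : ℝ≥0∞ :=
  ⨆ (R : Set G) (_ : IsCZ R),
    (ρG R)⁻¹ * ∫⁻ x in R, ENNReal.ofReal |g x - czMean g R| ∂ρG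

/-- `‖h‖_{BMO(ℝ)} = sup_Q |Q|⁻¹ ∫_Q |h − h_Q|` over bounded intervals `Q ⊂ ℝ`. -/
def lineBMO (h : ℝ → ℝ) : ℝ≥0∞ :=
  ⨆ (a : ℝ) (b : ℝ) (_ : a < b),
    (ENNReal.ofReal (b - a))⁻¹ *
      ∫⁻ s in Set.Icc a b, ENNReal.ofReal |h s - (∫ u in Set.Icc a b, h u) / (b - a)|

/-- `2R₀ = [−2,2]×[−2,2]×[e⁻²,e²]`. -/
def twoR0set : Set G :=
  Set.Icc (-2 : ℝ) 2 ×ˢ (Set.Icc (-2 : ℝ) 2 ×ˢ Set.Icc (Real.exp (-2)) (Real.exp 2))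

/-- The set `{x₁ > 3, |x₂| < 1, e⁻¹ < a < e}`. -/
def domSpecial : Set G :=
  {x : G | 3 < x.1 ∧ |x.2.1| < 1 ∧ Real.exp (-1) < x.2.2 ∧ x.2.2 < Real.exp 1}

/-- The function equal to `1/(x₁ (log x₁)^{3/2})` on `{x₁ > 3, |x₂| < 1, e⁻¹ < a < e}`,
to `c₀` on `R₀`, and `0` elsewhere. -/
def fSpecial (c0 : ℝ) : G → ℝ := fun x =>
  domSpecial.indicator (fun y => (y.1 * Real.log y.1 ^ ((3 : ℝ)/2))⁻¹) x
    + R0set.indicator (fun _ => c0) x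

/-
Right invariance of `ρ` gives `f ∗ p_t(x) = ∫ f(y⁻¹) p_t(yx) dρ(y)`. As `R_L` is carried onto `R₀`
by left translation by `τ = (-L, 0, 1)`, the function `f_L ∗ p_t(x)` is the integral of
`p_t(yτx) - p_t(yx)` over `y ∈ R₀⁻¹`, a set of finite measure, and it is enough to bound this
difference pointwise. The points `yτx` and `yx` have the same height, so only the radial factor `ψ`
of the kernel changes. The submultiplicativity `cosh r(gh) ≤ 2 cosh r(g) cosh r(h)` and
`r(x) ≥ 16 log L` keep both points at distance at least `r(x) / 2` from the identity.
If `2a cosh r(x) = a² + 1 + |x|²` is at least `10 L²`, both hyperbolic cosines are even comparable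
to `cosh r(x)`. Since `|dψ/dr| ≲ sinh r / (r sinh r)²` uniformly in `t`, the difference is
controlled by that of the hyperbolic cosines, which is explicit. Otherwise `sinh r(x) ≤ 5 L² / a`,
and the bound `ψ(r) ≲ 1 / (r² sinh r)` on each term suffices.
-/

lemma rpow_neg_mul_exp_neg_div_le {s c t : ℝ} (hs : 0 < s) (hc : 0 < c) (ht : 0 < t) :
    t ^ (-s) * exp (-(c / t)) ≤ (s / c) ^ s := by
  have h_exp : c / (s * t) ≤ exp (c / (s * t)) := by linarith [add_one_le_exp (c / (s * t))]
  have h_pow : (c / (s * t)) ^ s ≤ exp (c / t) := by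
    refine (rpow_le_rpow (by positivity) h_exp hs.le).trans_eq ?_
    rw [← exp_mul]
    congr 1
    field_simp
  rw [exp_neg, rpow_neg ht.le, ← mul_inv, inv_le_comm₀ (by positivity) (by positivity),
    ← inv_rpow (by positivity), inv_div]
  calc (c / s) ^ s = t ^ s * (c / (s * t)) ^ s := by
        rw [← mul_rpow ht.le (by positivity)]
        congr 1
        field_simp
    _ ≤ t ^ s * exp (c / t) := by gcongr

lemma rpow_neg_half_mul_gaussian_le {n : ℕ} (hn : 2 ≤ n) {r t : ℝ} (hr : 0 < r) (ht : 0 < t) :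
    t ^ (-(n : ℝ) / 2) * exp (-(r ^ 2) / (4 * t)) ≤ (n / r) ^ n := by
  have hn' : (2 : ℝ) ≤ n := by exact_mod_cast hn
  have h := rpow_neg_mul_exp_neg_div_le (s := n / 2) (c := r ^ 2 / 4) (by positivity)
    (by positivity) ht
  calc t ^ (-(n : ℝ) / 2) * exp (-(r ^ 2) / (4 * t))
      = t ^ (-((n : ℝ) / 2)) * exp (-(r ^ 2 / 4 / t)) := by
        rw [neg_div, neg_div, div_div]
    _ ≤ ((n : ℝ) / 2 / (r ^ 2 / 4)) ^ ((n : ℝ) / 2) := h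
    _ ≤ ((n / r) ^ 2) ^ ((n : ℝ) / 2) := by
        gcongr
        rw [div_pow, div_div_eq_mul_div, div_le_div_iff_of_pos_right (by positivity)]
        nlinarith
    _ = (n / r) ^ n := by
        rw [← rpow_natCast, ← rpow_mul (by positivity), Nat.cast_two, mul_div_cancel₀ _ two_ne_zero,
          rpow_natCast]

lemma abs_sub_le_mul_abs_sub_of_abs_deriv_le {f f' g g' : ℝ → ℝ} {s : Set ℝ} {K a b : ℝ}
    (hs : s.OrdConnected) (hf : ∀ r ∈ s, HasDerivAt f (f' r) r)
    (hg : ∀ r ∈ s, HasDerivAt g (g' r) r) (hg' : ∀ r ∈ s, 0 < g' r)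
    (hfg : ∀ r ∈ s, |f' r| ≤ K * g' r) (ha : a ∈ s) (hb : b ∈ s) :
    |f b - f a| ≤ K * |g b - g a| := by
  wlog hab : a < b generalizing a b
  · rcases (not_lt.1 hab).eq_or_lt with rfl | hba
    · simp
    · rw [abs_sub_comm (f b), abs_sub_comm (g b)]
      exact this hb ha hba
  have h_sub : Icc a b ⊆ s := hs.out ha hb
  obtain ⟨c, hc, h_eq⟩ := exists_ratio_hasDerivAt_eq_ratio_slope f f' hab
    (fun r hr => (hf r (h_sub hr)).continuousAt.continuousWithinAt)
    (fun r hr => hf r (h_sub (Ioo_subset_Icc_self hr))) g g'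
    (fun r hr => (hg r (h_sub hr)).continuousAt.continuousWithinAt)
    (fun r hr => hg r (h_sub (Ioo_subset_Icc_self hr)))
  have hcs : c ∈ s := h_sub (Ioo_subset_Icc_self hc)
  refine le_of_mul_le_mul_right ?_ (hg' c hcs)
  calc |f b - f a| * g' c = |g b - g a| * |f' c| := by
        rw [← abs_mul, h_eq, abs_mul, abs_of_pos (hg' c hcs)]
    _ ≤ |g b - g a| * (K * g' c) := by gcongr; exact hfg c hcs
    _ = K * |g b - g a| * g' c := by ring

lemma cosh_le_two_mul_sinh {r : ℝ} (hr : 1 ≤ r) : cosh r ≤ 2 * sinh r := by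
  have h_exp : 2 ≤ exp r := by linarith [add_one_le_exp r]
  have h_neg : exp (-r) ≤ 1 / 2 := by
    rw [exp_neg, ← one_div]
    exact one_div_le_one_div_of_le two_pos h_exp
  rw [cosh_eq, sinh_eq]
  linarith

lemma le_add_log_of_cosh_le {M r s : ℝ} (hM : 0 < M) (hs : 0 ≤ s) (h : cosh r ≤ M * cosh s) :
    r ≤ s + log (2 * M) := by
  rw [← exp_le_exp, exp_add, exp_log (by positivity)]
  have h_cosh : cosh s ≤ exp s := by linarith [cosh_add_sinh s, sinh_nonneg_iff.2 hs]
  have h_exp : exp r ≤ 2 * cosh r := by linarith [cosh_eq r, exp_pos (-r)]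
  nlinarith

lemma sinh_le_mul_sinh_of_cosh_le {M r s : ℝ} (hM : 0 < M) (hs : 1 ≤ s)
    (h : cosh r ≤ M * cosh s) : sinh r ≤ 2 * M * sinh s := by
  nlinarith [sinh_lt_cosh r, cosh_le_two_mul_sinh hs]

lemma half_le_of_cosh_le {L r s : ℝ} (hL : 2 ≤ L) (hr : 16 * log L ≤ r) (hs : 0 ≤ s)
    (h : cosh r ≤ 24 * L ^ 2 * cosh s) : r / 2 ≤ s := by
  have h_log : log (2 * (24 * L ^ 2)) ≤ 8 * log L := by
    rw [show 8 * log L = log (L ^ 8) by rw [log_pow, Nat.cast_ofNat]]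
    refine log_le_log (by positivity) ?_
    have : (2 : ℝ) ^ 6 ≤ L ^ 6 := by gcongr
    nlinarith [sq_nonneg L]
  linarith [le_add_log_of_cosh_le (by positivity) hs h]

lemma ten_le_of_mul_log_le {L r : ℝ} (hL : 2 ≤ L) (hr : 16 * log L ≤ r) : 10 ≤ r := by
  linarith [log_le_log two_pos hL, log_two_gt_d9]

lemma mul_log_le_log_rpow {k α L : ℝ} (hk : 1 ≤ k) (hα : 2 ≤ α) (hL : exp k ≤ L) :
    k * log L ≤ log L ^ α := by
  have h_log : k ≤ log L := (le_log_iff_exp_le ((exp_pos k).trans_le hL)).2 hL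
  calc k * log L ≤ log L ^ (2 : ℝ) := by rw [rpow_two]; nlinarith
    _ ≤ log L ^ α := rpow_le_rpow_of_exponent_le (hk.trans h_log) hα

/-- The radial factor `(r / sinh r) t^{-3/2} exp(-r² / (4t))` of the heat kernel, as a function of
the distance `r` to the identity. -/
def heatRadial (t r : ℝ) : ℝ :=
  (if r = 0 then 1 else r / sinh r) * t ^ (-(3 : ℝ) / 2) * exp (-(r ^ 2) / (4 * t))

section Radial

variable {t r : ℝ}

lemma heatRadial_of_ne_zero (hr : r ≠ 0) :
    heatRadial t r = r / sinh r * t ^ (-(3 : ℝ) / 2) * exp (-(r ^ 2) / (4 * t)) := by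
  rw [heatRadial, if_neg hr]

lemma heatRadial_nonneg (ht : 0 < t) (hr : 0 ≤ r) : 0 ≤ heatRadial t r := by
  have := sinh_nonneg_iff.2 hr
  unfold heatRadial
  positivity

lemma heatRadial_le_rpow (ht : 0 < t) (hr : 0 ≤ r) : heatRadial t r ≤ t ^ (-(3 : ℝ) / 2) := by
  have h_ratio : (if r = 0 then 1 else r / sinh r) ≤ 1 := by
    split_ifs
    · rfl
    · exact div_le_one_of_le₀ (self_le_sinh_iff.2 hr) (sinh_nonneg_iff.2 hr)
  have h_exp : exp (-(r ^ 2) / (4 * t)) ≤ 1 :=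
    exp_le_one_iff.2 (div_nonpos_of_nonpos_of_nonneg (by nlinarith) (by positivity))
  calc heatRadial t r ≤ 1 * t ^ (-(3 : ℝ) / 2) * 1 := by unfold heatRadial; gcongr
    _ = t ^ (-(3 : ℝ) / 2) := by ring

lemma heatRadial_le (ht : 0 < t) (hr : 0 < r) : heatRadial t r ≤ 27 / (r ^ 2 * sinh r) := by
  have := sinh_pos_iff.2 hr
  calc heatRadial t r
      = r / sinh r * (t ^ (-((3 : ℕ) : ℝ) / 2) * exp (-(r ^ 2) / (4 * t))) := by
        rw [heatRadial_of_ne_zero hr.ne', mul_assoc]; norm_num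
    _ ≤ r / sinh r * ((3 : ℕ) / r) ^ 3 := by
        gcongr; exact rpow_neg_half_mul_gaussian_le (by norm_num) hr ht
    _ = 27 / (r ^ 2 * sinh r) := by norm_num; field_simp; norm_num

lemma hasDerivAt_heatRadial (ht : t ≠ 0) (hr : r ≠ 0) :
    HasDerivAt (heatRadial t)
      (((sinh r - r * cosh r) / sinh r - r ^ 2 / (2 * t)) / sinh r *
        (t ^ (-(3 : ℝ) / 2) * exp (-(r ^ 2) / (4 * t)))) r := by
  have hsinh : sinh r ≠ 0 := sinh_ne_zero.2 hr
  have h_exp : HasDerivAt (fun r => exp (-(r ^ 2) / (4 * t)))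
      (exp (-(r ^ 2) / (4 * t)) * (-(2 * r) / (4 * t))) r := by
    simpa using ((hasDerivAt_pow 2 r).neg.div_const (4 * t)).exp
  have h_prod := (((hasDerivAt_id r).div (hasDerivAt_sinh r) hsinh).mul_const
    (t ^ (-(3 : ℝ) / 2))).mul h_exp
  refine (h_prod.congr_of_eventuallyEq ?_).congr_deriv ?_
  · filter_upwards [eventually_ne_nhds hr] with u hu using heatRadial_of_ne_zero hu
  · simp only [id_eq, Pi.div_apply]
    field_simp
    ring

lemma abs_deriv_heatRadial_le (ht : 0 < t) (hr : 1 ≤ r) :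
    |deriv (heatRadial t) r| ≤ 2000 / (r ^ 2 * sinh r) := by
  have hr₀ : 0 < r := by linarith
  have hsinh := sinh_pos_iff.2 hr₀
  have hcosh := cosh_pos r
  set T := t ^ (-(3 : ℝ) / 2) * exp (-(r ^ 2) / (4 * t)) with hT
  have hT_pos : 0 < T := by positivity
  have h_three : T ≤ (3 / r) ^ 3 := by
    simpa only [Nat.cast_ofNat] using rpow_neg_half_mul_gaussian_le (n := 3) (by norm_num) hr₀ ht
  have h_five : T / t ≤ (5 / r) ^ 5 := by
    have h_rpow : t ^ (-(5 : ℝ) / 2) = t ^ (-(3 : ℝ) / 2) / t := by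
      rw [← rpow_sub_one ht.ne']; norm_num
    rw [hT, mul_div_right_comm, ← h_rpow]
    simpa only [Nat.cast_ofNat] using rpow_neg_half_mul_gaussian_le (n := 5) (by norm_num) hr₀ ht
  have h_num : |(sinh r - r * cosh r) / sinh r - r ^ 2 / (2 * t)| ≤ 3 * r + r ^ 2 / (2 * t) := by
    refine (abs_sub _ _).trans ?_
    rw [abs_of_nonneg (by positivity : 0 ≤ r ^ 2 / (2 * t)), abs_div, abs_of_pos hsinh]
    gcongr
    rw [div_le_iff₀ hsinh, abs_le]
    constructor <;> nlinarith [cosh_le_two_mul_sinh hr]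
  rw [(hasDerivAt_heatRadial ht.ne' hr₀.ne').deriv, ← hT, abs_mul, abs_div, abs_of_pos hsinh,
    abs_of_pos hT_pos]
  calc |(sinh r - r * cosh r) / sinh r - r ^ 2 / (2 * t)| / sinh r * T
      ≤ (3 * r + r ^ 2 / (2 * t)) / sinh r * T := by gcongr
    _ = (3 * r * T + r ^ 2 / 2 * (T / t)) / sinh r := by field_simp
    _ ≤ (3 * r * (3 / r) ^ 3 + r ^ 2 / 2 * (5 / r) ^ 5) / sinh r := by gcongr
    _ = (81 + 3125 / 2 / r) / (r ^ 2 * sinh r) := by field_simp; ring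
    _ ≤ 2000 / (r ^ 2 * sinh r) := by
        gcongr
        linarith [div_le_self (by norm_num : (0 : ℝ) ≤ 3125 / 2) hr]

end Radial

lemma abs_heatRadial_sub_le {t m r₀ r₁ : ℝ} (ht : 0 < t) (hm : 1 ≤ m) (h₀ : m ≤ r₀)
    (h₁ : m ≤ r₁) :
    |heatRadial t r₁ - heatRadial t r₀| ≤
      2000 / (m ^ 2 * sinh m ^ 2) * |cosh r₁ - cosh r₀| := by
  have hm₀ : 0 < m := by linarith
  have := sinh_pos_iff.2 hm₀
  refine abs_sub_le_mul_abs_sub_of_abs_deriv_le ordConnected_Ici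
    (fun r hr => (hasDerivAt_heatRadial ht.ne' (hm₀.trans_le hr).ne').differentiableAt.hasDerivAt)
    (fun r _ => hasDerivAt_cosh r) (fun r hr => sinh_pos_iff.2 (hm₀.trans_le hr))
    (fun r (hr : m ≤ r) => ?_) h₀ h₁
  have hr₀ : 0 < r := hm₀.trans_le hr
  have := sinh_pos_iff.2 hr₀
  calc |deriv (heatRadial t) r|
      ≤ 2000 / (r ^ 2 * sinh r) := abs_deriv_heatRadial_le ht (hm.trans hr)
    _ = 2000 / (r ^ 2 * sinh r ^ 2) * sinh r := by field_simp
    _ ≤ 2000 / (m ^ 2 * sinh m ^ 2) * sinh r := by gcongr; exact sinh_le_sinh.2 hr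

lemma abs_heatRadial_sub_le_of_cosh_le {M t r r₀ r₁ : ℝ} (ht : 0 < t) (hM : 0 < M) (hr : 2 ≤ r)
    (h₀ : r / 2 ≤ r₀) (h₁ : r / 2 ≤ r₁) (hc₀ : cosh r ≤ M * cosh r₀)
    (hc₁ : cosh r ≤ M * cosh r₁) :
    |heatRadial t r₁ - heatRadial t r₀| ≤
      32000 * M ^ 2 / (r ^ 2 * sinh r ^ 2) * |cosh r₁ - cosh r₀| := by
  obtain ⟨m, hm₀, hm₁, hm, hcm⟩ : ∃ m ≤ r₀, m ≤ r₁ ∧ r / 2 ≤ m ∧ cosh r ≤ M * cosh m := by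
    rcases le_total r₀ r₁ with h | h
    · exact ⟨r₀, le_rfl, h, h₀, hc₀⟩
    · exact ⟨r₁, h, le_rfl, h₁, hc₁⟩
  have hm_one : 1 ≤ m := by linarith
  have : 0 < sinh r := sinh_pos_iff.2 (by linarith)
  have : 0 < sinh m := sinh_pos_iff.2 (by linarith)
  refine (abs_heatRadial_sub_le ht hm_one hm₀ hm₁).trans
    (mul_le_mul_of_nonneg_right ?_ (abs_nonneg _))
  calc 2000 / (m ^ 2 * sinh m ^ 2) ≤ 2000 / ((r / 2) ^ 2 * (sinh r / (2 * M)) ^ 2) := by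
        gcongr
        rw [div_le_iff₀' (by positivity)]
        exact sinh_le_mul_sinh_of_cosh_le hM hm_one hcm
    _ = 32000 * M ^ 2 / (r ^ 2 * sinh r ^ 2) := by field_simp; norm_num

lemma heatRadial_le_of_cosh_le {M t r s : ℝ} (ht : 0 < t) (hM : 0 < M) (hr : 2 ≤ r)
    (hs : r / 2 ≤ s) (hc : cosh r ≤ M * cosh s) :
    heatRadial t s ≤ 216 * M / (r ^ 2 * sinh r) := by
  have hs_one : 1 ≤ s := by linarith
  have : 0 < sinh r := sinh_pos_iff.2 (by linarith)
  calc heatRadial t s ≤ 27 / (s ^ 2 * sinh s) := heatRadial_le ht (by linarith)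
    _ ≤ 27 / ((r / 2) ^ 2 * (sinh r / (2 * M))) := by
        gcongr
        rw [div_le_iff₀' (by positivity)]
        exact sinh_le_mul_sinh_of_cosh_le hM hs_one hc
    _ = 216 * M / (r ^ 2 * sinh r) := by field_simp; norm_num

section Group

variable {x y : G}

lemma gMul_assoc (x y z : G) : gMul (gMul x y) z = gMul x (gMul y z) := by
  simp only [gMul, Prod.mk.injEq]
  refine ⟨?_, ?_, ?_⟩ <;> ring

lemma gMul_gInv_cancel_right (hx : x.2.2 ≠ 0) (y : G) : gMul (gMul y x) (gInv x) = y := by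
  simp only [gMul, gInv, Prod.ext_iff]
  refine ⟨?_, ?_, ?_⟩ <;> field_simp <;> ring

lemma gInv_gMul_cancel_right (hx : x.2.2 ≠ 0) (y : G) : gMul (gMul y (gInv x)) x = y := by
  simp only [gMul, gInv, Prod.ext_iff]
  refine ⟨?_, ?_, ?_⟩ <;> field_simp <;> ring

lemma gInv_gMul_cancel_left (hy : y.2.2 ≠ 0) (x : G) : gMul (gInv y) (gMul y x) = x := by
  simp only [gMul, gInv, Prod.ext_iff]
  refine ⟨?_, ?_, ?_⟩ <;> field_simp <;> ring

lemma gMul_gInv_gMul (hx : x.2.2 ≠ 0) (hy : y.2.2 ≠ 0) : gMul x (gInv (gMul y x)) = gInv y := by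
  simp only [gMul, gInv, Prod.ext_iff]
  refine ⟨?_, ?_, ?_⟩ <;> field_simp <;> ring

lemma gMul_pos (hx : 0 < x.2.2) (hy : 0 < y.2.2) : 0 < (gMul x y).2.2 :=
  mul_pos hx hy

lemma coshArg_eq (hx : x.2.2 ≠ 0) :
    coshArg x = (x.2.2 ^ 2 + 1 + (x.1 ^ 2 + x.2.1 ^ 2)) / (2 * x.2.2) := by
  unfold coshArg
  field_simp

lemma one_le_coshArg (hx : 0 < x.2.2) : 1 ≤ coshArg x := by
  rw [coshArg_eq hx.ne', one_le_div (by positivity)]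
  nlinarith [sq_nonneg (x.2.2 - 1), sq_nonneg x.1, sq_nonneg x.2.1]

lemma coshArg_gInv (hx : x.2.2 ≠ 0) : coshArg (gInv x) = coshArg x := by
  simp only [coshArg, gInv]
  field_simp
  ring

lemma coshArg_gMul_le (hx : 0 < x.2.2) (hy : 0 < y.2.2) :
    coshArg (gMul x y) ≤ 2 * coshArg x * coshArg y := by
  rw [coshArg_eq (gMul_pos hx hy).ne', coshArg_eq hx.ne', coshArg_eq hy.ne',
    div_le_iff₀ (mul_pos two_pos (gMul_pos hx hy))]
  simp only [gMul]
  field_simp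
  nlinarith [sq_nonneg (x.2.2 - (x.1 * y.1 + x.2.1 * y.2.1)),
    sq_nonneg (x.1 * y.2.1 - x.2.1 * y.1), sq_nonneg y.1, sq_nonneg y.2.1, sq_nonneg y.2.2,
    sq_nonneg (y.2.2 * x.1), sq_nonneg (y.2.2 * x.2.1)]

lemma coshArg_le_coshArg_gMul (hx : 0 < x.2.2) (hy : 0 < y.2.2) :
    coshArg x ≤ 2 * coshArg y * coshArg (gMul y x) := by
  have hy_inv : 0 < (gInv y).2.2 := one_div_pos.2 hy
  have := coshArg_gMul_le hy_inv (gMul_pos hy hx)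
  rwa [gInv_gMul_cancel_left hy.ne', coshArg_gInv hy.ne'] at this

lemma cosh_rG (hx : 0 < x.2.2) : cosh (rG x) = coshArg x :=
  cosh_arcosh (one_le_coshArg hx)

lemma rG_nonneg (hx : 0 < x.2.2) : 0 ≤ rG x :=
  arcosh_nonneg (one_le_coshArg hx)

lemma abs_fst_le_normG (x : G) : |x.1| ≤ normG x :=
  abs_le_sqrt (by nlinarith [sq_nonneg x.2.1])

lemma heatK_eq_heatRadial (t : ℝ) (hx : 0 < x.2.2) :
    heatK t x = (8 * π ^ ((3 : ℝ) / 2))⁻¹ * x.2.2⁻¹ * heatRadial t (rG x) := by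
  have h_delta : √(deltaG x) = x.2.2⁻¹ := by
    rw [deltaG, sqrt_inv, sqrt_sq hx.le]
  simp only [heatK, heatRadial, h_delta, mul_assoc]

lemma heat_const_le_one : (8 * π ^ ((3 : ℝ) / 2))⁻¹ ≤ 1 :=
  inv_le_one_of_one_le₀ <| by
    linarith [one_le_rpow (by linarith [pi_gt_three] : 1 ≤ π) (by norm_num : (0 : ℝ) ≤ 3 / 2)]

lemma abs_heatK_le {t : ℝ} (ht : 0 < t) (hx : 0 < x.2.2) :
    |heatK t x| ≤ x.2.2⁻¹ * t ^ (-(3 : ℝ) / 2) := by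
  have h_radial := heatRadial_nonneg ht (rG_nonneg hx)
  rw [heatK_eq_heatRadial t hx, abs_of_nonneg (by positivity)]
  calc (8 * π ^ ((3 : ℝ) / 2))⁻¹ * x.2.2⁻¹ * heatRadial t (rG x)
      ≤ 1 * x.2.2⁻¹ * t ^ (-(3 : ℝ) / 2) := by
        gcongr
        exacts [heat_const_le_one, heatRadial_le_rpow ht (rG_nonneg hx)]
    _ = x.2.2⁻¹ * t ^ (-(3 : ℝ) / 2) := by ring

lemma abs_heatK_sub_le (t : ℝ) (hx : 0 < x.2.2) (hxy : y.2.2 = x.2.2) :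
    |heatK t y - heatK t x| ≤ x.2.2⁻¹ * |heatRadial t (rG y) - heatRadial t (rG x)| := by
  rw [heatK_eq_heatRadial t hx, heatK_eq_heatRadial t (hxy ▸ hx), hxy, ← mul_sub, abs_mul,
    abs_of_nonneg (by positivity)]
  gcongr
  exact mul_le_of_le_one_left (by positivity) heat_const_le_one

end Group

/-- The profile `(L³/a²) r(x)⁻² (sinh r(x))⁻² (L + |x|)` of the estimate at `x = (x₁, x₂, a)`. -/
def decayBound (L : ℝ) (x : G) : ℝ :=
  L ^ 3 / x.2.2 ^ 2 * (rG x)⁻¹ ^ 2 * (sinh (rG x))⁻¹ ^ 2 * (L + normG x)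

/-- The element `(-L, 0, 1)`, whose left translation carries `R_L` onto `R₀`. -/
def shiftG (L : ℝ) : G := (-L, 0, 1)

section Shift

variable {L t : ℝ} {x y : G}

lemma shiftG_pos (L : ℝ) : 0 < (shiftG L).2.2 :=
  one_pos

lemma shiftG_gMul_pos (L : ℝ) (hx : 0 < x.2.2) : 0 < (gMul (shiftG L) x).2.2 :=
  gMul_pos (shiftG_pos L) hx

lemma coshArg_shiftG_le (hL : 2 ≤ L) : coshArg (shiftG L) ≤ L ^ 2 := by
  have h_eq : coshArg (shiftG L) = 1 + L ^ 2 / 2 := by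
    rw [coshArg_eq (shiftG_pos L).ne']
    simp only [shiftG]
    ring
  nlinarith

lemma coshArg_le_coshArg_shiftG_gMul (hL : 2 ≤ L) (hx : 0 < x.2.2) :
    coshArg x ≤ 2 * L ^ 2 * coshArg (gMul (shiftG L) x) := by
  have := one_le_coshArg (shiftG_gMul_pos L hx)
  refine (coshArg_le_coshArg_gMul hx (shiftG_pos L)).trans ?_
  gcongr
  exact coshArg_shiftG_le hL

lemma coshArg_le_coshArg_shiftG_gMul_of_le (hx : 0 < x.2.2)
    (h_far : 10 * L ^ 2 ≤ 2 * x.2.2 * coshArg x) :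
    coshArg x ≤ 5 / 2 * coshArg (gMul (shiftG L) x) := by
  rw [coshArg_eq hx.ne', mul_div_cancel₀ _ (by positivity)] at h_far
  rw [coshArg_eq hx.ne', coshArg_eq (shiftG_gMul_pos L hx).ne', ← mul_div_assoc]
  simp only [gMul, shiftG, one_mul, zero_add]
  gcongr
  nlinarith [sq_nonneg (2 * L - x.1), sq_nonneg x.2.1, sq_nonneg x.2.2]

lemma abs_coshArg_gMul_shiftG_sub_le (hL : 2 ≤ L) (hx : 0 < x.2.2) (hy : 0 < y.2.2)
    (hy_fst : |y.1| ≤ y.2.2) :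
    |coshArg (gMul y (gMul (shiftG L) x)) - coshArg (gMul y x)| ≤
      y.2.2 * L * (L + normG x) / x.2.2 := by
  have h_diff : coshArg (gMul y (gMul (shiftG L) x)) - coshArg (gMul y x) =
      L * (y.2.2 * L - 2 * y.1 - 2 * (y.2.2 * x.1)) / (2 * x.2.2) := by
    simp only [coshArg, gMul, shiftG, one_mul, zero_add]
    field_simp
    ring
  have h_fst : |y.2.2 * x.1| ≤ y.2.2 * normG x := by
    rw [abs_mul, abs_of_pos hy]
    gcongr
    exact abs_fst_le_normG x
  have h_num : |y.2.2 * L - 2 * y.1 - 2 * (y.2.2 * x.1)| ≤ 2 * (y.2.2 * (L + normG x)) := by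
    rw [abs_le] at *
    constructor <;> nlinarith
  rw [h_diff, abs_div, abs_mul, abs_of_pos (by linarith : 0 < L),
    abs_of_pos (by positivity : 0 < 2 * x.2.2)]
  calc L * |y.2.2 * L - 2 * y.1 - 2 * (y.2.2 * x.1)| / (2 * x.2.2)
      ≤ L * (2 * (y.2.2 * (L + normG x))) / (2 * x.2.2) := by gcongr
    _ = y.2.2 * L * (L + normG x) / x.2.2 := by field_simp

lemma bounds_of_gInv_mem_R0set (hy : gInv y ∈ R0set) :
    1 / 3 ≤ y.2.2 ∧ y.2.2 ≤ 3 ∧ |y.1| ≤ y.2.2 ∧ |y.2.1| ≤ y.2.2 := by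
  obtain ⟨h₁, h₂, h₃, h₃'⟩ := hy
  simp only [gInv, ← abs_le, mem_Icc] at h₁ h₂ h₃ h₃'
  have h_exp : exp 1 ≤ 3 := by linarith [exp_one_lt_d9]
  have hy_pos : 0 < y.2.2 := one_div_pos.1 ((exp_pos _).trans_le h₃)
  rw [abs_div, abs_neg, abs_of_pos hy_pos, div_le_one hy_pos] at h₁ h₂
  rw [one_div_le hy_pos (exp_pos 1)] at h₃'
  rw [exp_neg, ← one_div, one_div_le_one_div (exp_pos 1) hy_pos] at h₃
  exact ⟨(one_div_le_one_div_of_le (exp_pos 1) h_exp).trans h₃', h₃.trans h_exp, h₁, h₂⟩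

lemma coshArg_le_of_gInv_mem_R0set (hy : gInv y ∈ R0set) : coshArg y ≤ 6 := by
  obtain ⟨h_lower, h_upper, h₁, h₂⟩ := bounds_of_gInv_mem_R0set hy
  have hy_pos : 0 < y.2.2 := by linarith
  rw [coshArg_eq hy_pos.ne', div_le_iff₀ (by positivity)]
  nlinarith [sq_le_sq' (abs_le.1 h₁).1 (abs_le.1 h₁).2, sq_le_sq' (abs_le.1 h₂).1 (abs_le.1 h₂).2]

lemma coshArg_le_coshArg_gMul_of_gInv_mem_R0set (hx : 0 < x.2.2) (hy : gInv y ∈ R0set) :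
    coshArg x ≤ 12 * coshArg (gMul y x) := by
  have hy_pos : 0 < y.2.2 := by linarith [(bounds_of_gInv_mem_R0set hy).1]
  have := one_le_coshArg (gMul_pos hy_pos hx)
  refine (coshArg_le_coshArg_gMul hx hy_pos).trans ?_
  gcongr
  linarith [coshArg_le_of_gInv_mem_R0set hy]

lemma abs_heatK_gMul_shiftG_sub_le_of_far (ht : 0 < t) (hL : 2 ≤ L) (hx : 0 < x.2.2)
    (hr : 10 ≤ rG x) (hy : gInv y ∈ R0set) (h₀ : rG x / 2 ≤ rG (gMul y x))
    (h₁ : rG x / 2 ≤ rG (gMul y (gMul (shiftG L) x)))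
    (h_far : 10 * L ^ 2 ≤ 2 * x.2.2 * coshArg x) :
    |heatK t (gMul y (gMul (shiftG L) x)) - heatK t (gMul y x)| ≤
      3 * 10 ^ 7 * decayBound L x := by
  obtain ⟨hy_lower, -, hy_fst, -⟩ := bounds_of_gInv_mem_R0set hy
  have hy_pos : 0 < y.2.2 := by linarith
  have hx_shift := shiftG_gMul_pos L hx
  have : 0 < sinh (rG x) := sinh_pos_iff.2 (by linarith)
  have h_norm : 0 ≤ normG x := sqrt_nonneg _
  have h_L : L ≤ L ^ 3 := le_self_pow₀ (by linarith) (by norm_num)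
  have hc₀ : cosh (rG x) ≤ 30 * cosh (rG (gMul y x)) := by
    rw [cosh_rG hx, cosh_rG (gMul_pos hy_pos hx)]
    linarith [coshArg_le_coshArg_gMul_of_gInv_mem_R0set hx hy,
      one_le_coshArg (gMul_pos hy_pos hx)]
  have hc₁ : cosh (rG x) ≤ 30 * cosh (rG (gMul y (gMul (shiftG L) x))) := by
    rw [cosh_rG hx, cosh_rG (gMul_pos hy_pos hx_shift)]
    linarith [coshArg_le_coshArg_shiftG_gMul_of_le hx h_far,
      coshArg_le_coshArg_gMul_of_gInv_mem_R0set hx_shift hy]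
  have h_radial := abs_heatRadial_sub_le_of_cosh_le ht (by norm_num) (by linarith) h₀ h₁ hc₀ hc₁
  rw [cosh_rG (gMul_pos hy_pos hx), cosh_rG (gMul_pos hy_pos hx_shift)] at h_radial
  calc |heatK t (gMul y (gMul (shiftG L) x)) - heatK t (gMul y x)|
      ≤ (y.2.2 * x.2.2)⁻¹ * _ := abs_heatK_sub_le t (gMul_pos hy_pos hx) (by simp [gMul, shiftG])
    _ ≤ (y.2.2 * x.2.2)⁻¹ * (32000 * 30 ^ 2 / (rG x ^ 2 * sinh (rG x) ^ 2) *
          (y.2.2 * L * (L + normG x) / x.2.2)) := by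
        gcongr
        refine h_radial.trans ?_
        gcongr
        exact abs_coshArg_gMul_shiftG_sub_le hL hx hy_pos hy_fst
    _ = 28800000 * (L / x.2.2 ^ 2 * (rG x)⁻¹ ^ 2 * (sinh (rG x))⁻¹ ^ 2 * (L + normG x)) := by
        field_simp
        norm_num
    _ ≤ 3 * 10 ^ 7 * decayBound L x := by
        unfold decayBound
        gcongr
        norm_num

lemma abs_heatK_gMul_shiftG_sub_le_of_near (ht : 0 < t) (hL : 2 ≤ L) (hx : 0 < x.2.2)
    (hr : 10 ≤ rG x) (hy : gInv y ∈ R0set) (h₀ : rG x / 2 ≤ rG (gMul y x))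
    (h₁ : rG x / 2 ≤ rG (gMul y (gMul (shiftG L) x)))
    (hc₀ : cosh (rG x) ≤ 24 * L ^ 2 * cosh (rG (gMul y x)))
    (hc₁ : cosh (rG x) ≤ 24 * L ^ 2 * cosh (rG (gMul y (gMul (shiftG L) x))))
    (h_near : 2 * x.2.2 * coshArg x ≤ 10 * L ^ 2) :
    |heatK t (gMul y (gMul (shiftG L) x)) - heatK t (gMul y x)| ≤
      3 * 10 ^ 7 * decayBound L x := by
  obtain ⟨hy_lower, -⟩ := bounds_of_gInv_mem_R0set hy
  have hy_pos : 0 < y.2.2 := by linarith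
  have : 0 < L := by linarith
  have hr_pos : 0 < rG x := by linarith
  have : 0 < sinh (rG x) := sinh_pos_iff.2 hr_pos
  have h_norm : 0 ≤ normG x := sqrt_nonneg _
  have h_sinh_le : sinh (rG x) ≤ 5 * L ^ 2 / x.2.2 := by
    rw [le_div_iff₀ hx]
    nlinarith [sinh_lt_cosh (rG x), cosh_rG hx]
  have h_y_inv : y.2.2⁻¹ ≤ 3 := inv_le_of_inv_le₀ (by norm_num) (by linarith)
  have h_radial : |heatRadial t (rG (gMul y (gMul (shiftG L) x))) - heatRadial t (rG (gMul y x))| ≤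
      216 * (24 * L ^ 2) / (rG x ^ 2 * sinh (rG x)) :=
    abs_sub_le_of_nonneg_of_le
      (heatRadial_nonneg ht (by linarith))
      (heatRadial_le_of_cosh_le ht (by positivity) (by linarith) h₁ hc₁)
      (heatRadial_nonneg ht (by linarith))
      (heatRadial_le_of_cosh_le ht (by positivity) (by linarith) h₀ hc₀)
  calc |heatK t (gMul y (gMul (shiftG L) x)) - heatK t (gMul y x)|
      ≤ (y.2.2 * x.2.2)⁻¹ * _ := abs_heatK_sub_le t (gMul_pos hy_pos hx) (by simp [gMul, shiftG])
    _ ≤ (y.2.2 * x.2.2)⁻¹ * (216 * (24 * L ^ 2) / (rG x ^ 2 * sinh (rG x))) := by gcongr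
    _ = y.2.2⁻¹ * (5184 * L ^ 2 / (x.2.2 * rG x ^ 2 * sinh (rG x) ^ 2)) * sinh (rG x) := by
        field_simp
        norm_num
    _ ≤ 3 * (5184 * L ^ 2 / (x.2.2 * rG x ^ 2 * sinh (rG x) ^ 2)) * (5 * L ^ 2 / x.2.2) := by
        gcongr
    _ = 77760 * (L ^ 3 / x.2.2 ^ 2 * (rG x)⁻¹ ^ 2 * (sinh (rG x))⁻¹ ^ 2 * (L + 0)) := by
        field_simp
        ring
    _ ≤ 3 * 10 ^ 7 * decayBound L x := by
        unfold decayBound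
        gcongr
        norm_num

lemma abs_heatK_gMul_shiftG_sub_le (ht : 0 < t) (hL : 2 ≤ L) (hx : 0 < x.2.2)
    (hr : 16 * log L ≤ rG x) (hy : gInv y ∈ R0set) :
    |heatK t (gMul y (gMul (shiftG L) x)) - heatK t (gMul y x)| ≤
      3 * 10 ^ 7 * decayBound L x := by
  have hy_pos : 0 < y.2.2 := by linarith [(bounds_of_gInv_mem_R0set hy).1]
  have hx_shift := shiftG_gMul_pos L hx
  have h_ten := ten_le_of_mul_log_le hL hr
  have hc₀ : cosh (rG x) ≤ 24 * L ^ 2 * cosh (rG (gMul y x)) := by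
    rw [cosh_rG hx, cosh_rG (gMul_pos hy_pos hx)]
    have := one_le_coshArg (gMul_pos hy_pos hx)
    refine (coshArg_le_coshArg_gMul_of_gInv_mem_R0set hx hy).trans ?_
    gcongr
    nlinarith
  have hc₁ : cosh (rG x) ≤ 24 * L ^ 2 * cosh (rG (gMul y (gMul (shiftG L) x))) := by
    rw [cosh_rG hx, cosh_rG (gMul_pos hy_pos hx_shift)]
    nlinarith [coshArg_le_coshArg_shiftG_gMul hL hx, sq_nonneg L,
      coshArg_le_coshArg_gMul_of_gInv_mem_R0set hx_shift hy]
  have h₀ := half_le_of_cosh_le hL hr (rG_nonneg (gMul_pos hy_pos hx)) hc₀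
  have h₁ := half_le_of_cosh_le hL hr (rG_nonneg (gMul_pos hy_pos hx_shift)) hc₁
  rcases le_total (10 * L ^ 2) (2 * x.2.2 * coshArg x) with h_far | h_near
  · exact abs_heatK_gMul_shiftG_sub_le_of_far ht hL hx h_ten hy h₀ h₁ h_far
  · exact abs_heatK_gMul_shiftG_sub_le_of_near ht hL hx h_ten hy h₀ h₁ hc₀ hc₁ h_near

end Shift

/-- The density of the Haar measure `a⁻¹ da` of the multiplicative group `ℝ⁺`, extended by zero. -/
def mulHaarDensity (a : ℝ) : ℝ≥0∞ := ENNReal.ofReal (if 0 < a then a⁻¹ else 0)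

/-- The Haar measure `a⁻¹ da` of the multiplicative group `ℝ⁺`, as a measure on `ℝ`. -/
def mulHaar : Measure ℝ := volume.withDensity mulHaarDensity

@[fun_prop]
lemma measurable_mulHaarDensity : Measurable mulHaarDensity :=
  (measurable_inv.ite measurableSet_Ioi measurable_const).ennreal_ofReal

instance : SigmaFinite mulHaar := SigmaFinite.withDensity_ofReal _

lemma ofReal_mul_mulHaarDensity_mul {c : ℝ} (hc : 0 < c) (a : ℝ) :
    ENNReal.ofReal c * mulHaarDensity (a * c) = mulHaarDensity a := by
  rw [mulHaarDensity, mulHaarDensity, ← ENNReal.ofReal_mul hc.le]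
  congr 1
  simp only [mul_pos_iff_of_pos_right hc]
  split_ifs
  · field_simp
  · simp

lemma measurePreserving_mul_right_mulHaar {c : ℝ} (hc : 0 < c) :
    MeasurePreserving (· * c) mulHaar mulHaar := by
  have h_meas : Measurable (· * c : ℝ → ℝ) := measurable_mul_const c
  refine ⟨h_meas, Measure.ext fun s hs => ?_⟩
  rw [Measure.map_apply h_meas hs, mulHaar, withDensity_apply _ (h_meas hs),
    withDensity_apply _ hs]
  conv_rhs => rw [← Real.smul_map_volume_mul_right hc.ne', Measure.restrict_smul,
    lintegral_smul_measure, setLIntegral_map hs measurable_mulHaarDensity h_meas, abs_of_pos hc,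
    smul_eq_mul, ← lintegral_const_mul _ (by fun_prop)]
  simp only [ofReal_mul_mulHaarDensity_mul hc]

lemma ρG_eq_prod : ρG = (volume : Measure ℝ).prod ((volume : Measure ℝ).prod mulHaar) := by
  rw [mulHaar, prod_withDensity_right measurable_mulHaarDensity,
    prod_withDensity_right (by fun_prop)]
  rfl

lemma measurePreserving_add_prodMap {α β : Type*} [AddGroup α] [MeasurableSpace α]
    [MeasurableAdd₂ α] [MeasurableSpace β] {ν : Measure α} {μ : Measure β} [SFinite ν] [SFinite μ]
    [ν.IsAddRightInvariant] {f : β → β} (hf : MeasurePreserving f μ μ) {g : β → α}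
    (hg : Measurable g) :
    MeasurePreserving (fun p : α × β => (p.1 + g p.2, f p.2)) (ν.prod μ) (ν.prod μ) := by
  have h_skew : MeasurePreserving (fun p : β × α => (f p.1, p.2 + g p.1)) (μ.prod ν) (μ.prod ν) :=
    hf.skew_product (g := fun b s => s + g b) (by unfold Function.uncurry; fun_prop)
      (Eventually.of_forall fun b => (measurePreserving_add_right ν (g b)).map_eq)
  exact (Measure.measurePreserving_swap.comp h_skew).comp Measure.measurePreserving_swap

lemma measurePreserving_gMul_right {x : G} (hx : 0 < x.2.2) :
    MeasurePreserving (gMul · x) ρG ρG := by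
  have h_snd := measurePreserving_add_prodMap (ν := volume) (g := fun a : ℝ => a * x.2.1)
    (measurePreserving_mul_right_mulHaar hx) (by fun_prop)
  rw [ρG_eq_prod]
  unfold gMul
  exact measurePreserving_add_prodMap (ν := volume) (g := fun p : ℝ × ℝ => p.2 * x.1)
    h_snd (by fun_prop)

lemma ae_pos_mulHaar : ∀ᵐ a ∂mulHaar, 0 < a := by
  rw [mulHaar, ae_withDensity_iff measurable_mulHaarDensity]
  refine Eventually.of_forall fun a ha => ?_
  by_contra h
  simp [mulHaarDensity, h] at ha

lemma ae_pos_ρG : ∀ᵐ y ∂ρG, 0 < y.2.2 := by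
  rw [ρG_eq_prod]
  exact (Measure.quasiMeasurePreserving_snd.comp Measure.quasiMeasurePreserving_snd).ae
    ae_pos_mulHaar

lemma ρG_lt_top_of_isBounded {S : Set G} {ε : ℝ} (hε : 0 < ε) (hS : Bornology.IsBounded S)
    (h : ∀ y ∈ S, ε ≤ y.2.2) : ρG S < ∞ := by
  rw [ρG, withDensity_apply' _ S]
  calc _ ≤ ∫⁻ _ in S, ENNReal.ofReal ε⁻¹ := by
        refine setLIntegral_mono measurable_const fun y hy => ?_
        gcongr
        split_ifs
        · exact inv_anti₀ hε (h y hy)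
        · positivity
    _ < ∞ := by
        rw [setLIntegral_const]
        exact ENNReal.mul_lt_top ENNReal.ofReal_lt_top hS.measure_lt_top

lemma measurable_gMul_right (x : G) : Measurable (gMul · x) := by
  unfold gMul
  fun_prop

lemma measurable_gInv : Measurable gInv := by
  unfold gInv
  fun_prop

lemma measurableEmbedding_gMul_right {x : G} (hx : x.2.2 ≠ 0) : MeasurableEmbedding (gMul · x) :=
  (MeasurableEquiv.mk ⟨(gMul · x), (gMul · (gInv x)), gMul_gInv_cancel_right hx,
    gInv_gMul_cancel_right hx⟩ (measurable_gMul_right x)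
    (measurable_gMul_right (gInv x))).measurableEmbedding

lemma measurable_rG : Measurable rG := by
  unfold rG coshArg
  fun_prop

lemma measurable_heatK (t : ℝ) : Measurable (heatK t) := by
  have h_ratio : Measurable fun x => if rG x = 0 then 1 else rG x / sinh (rG x) :=
    (measurable_const).ite (measurable_rG (measurableSet_singleton 0))
      (measurable_rG.div measurable_rG.sinh)
  have := measurable_rG
  unfold heatK deltaG
  fun_prop

section Convolution

variable {L t : ℝ} {x : G} {A : Set G}

lemma convHeat_integrand_ae_eq (f : G → ℝ) (t : ℝ) (hx : 0 < x.2.2) :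
    (fun y => f (gMul x (gInv y)) * heatK t y) ∘ (gMul · x) =ᵐ[ρG]
      fun y => f (gInv y) * heatK t (gMul y x) := by
  filter_upwards [ae_pos_ρG] with y hy
  simp only [Function.comp_apply, gMul_gInv_gMul hx.ne' hy.ne']

lemma indicator_one_mul_comp_gInv (A : Set G) (k : G → ℝ) :
    (fun y => A.indicator (fun _ => (1 : ℝ)) (gInv y) * k y) = (gInv ⁻¹' A).indicator k := by
  ext y
  by_cases hy : gInv y ∈ A <;> simp [hy]

lemma convHeat_indicator (hA : MeasurableSet A) (t : ℝ) (hx : 0 < x.2.2) :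
    convHeat (A.indicator fun _ => 1) t x = ∫ y in gInv ⁻¹' A, heatK t (gMul y x) ∂ρG := by
  rw [convHeat, ← (measurePreserving_gMul_right hx).integral_comp
    (measurableEmbedding_gMul_right hx.ne'), ← integral_indicator (measurable_gInv hA),
    ← indicator_one_mul_comp_gInv]
  exact integral_congr_ae (convHeat_integrand_ae_eq _ t hx)

lemma integrable_indicator_mul_heatK (hA : MeasurableSet A) (hx : 0 < x.2.2)
    (h : IntegrableOn (fun y => heatK t (gMul y x)) (gInv ⁻¹' A) ρG) :
    Integrable (fun y => A.indicator (fun _ => (1 : ℝ)) (gMul x (gInv y)) * heatK t y) ρG := by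
  rw [← (measurePreserving_gMul_right hx).integrable_comp_emb
    (measurableEmbedding_gMul_right hx.ne'), integrable_congr (convHeat_integrand_ae_eq _ t hx),
    indicator_one_mul_comp_gInv]
  exact h.integrable_indicator (measurable_gInv hA)

lemma measurableSet_R0set : MeasurableSet R0set :=
  measurableSet_Icc.prod (measurableSet_Icc.prod measurableSet_Icc)

lemma ρG_preimage_gInv_R0set_lt_top : ρG (gInv ⁻¹' R0set) < ∞ := by
  refine ρG_lt_top_of_isBounded (ε := 1 / 3) (by norm_num)
    ((Metric.isBounded_Icc ((-3, -3, 0) : G) (3, 3, 3)).subset fun y hy => ?_)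
    fun y hy => (bounds_of_gInv_mem_R0set hy).1
  obtain ⟨h_lower, h_upper, h₁, h₂⟩ := bounds_of_gInv_mem_R0set hy
  rw [abs_le] at h₁ h₂
  exact ⟨⟨by linarith, by linarith, by linarith⟩, by linarith, by linarith, h_upper⟩

lemma integrableOn_heatK_gMul_right (ht : 0 < t) (hx : 0 < x.2.2) :
    IntegrableOn (fun y => heatK t (gMul y x)) (gInv ⁻¹' R0set) ρG := by
  refine Measure.integrableOn_of_bounded (M := 3 * x.2.2⁻¹ * t ^ (-(3 : ℝ) / 2))
    ρG_preimage_gInv_R0set_lt_top.ne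
    ((measurable_heatK t).comp (measurable_gMul_right x)).aestronglyMeasurable ?_
  filter_upwards [ae_restrict_mem (measurable_gInv measurableSet_R0set)] with y hy
  have hy_lower : 1 / 3 ≤ y.2.2 := (bounds_of_gInv_mem_R0set hy).1
  have hy_pos : 0 < y.2.2 := by linarith
  have hy_inv : y.2.2⁻¹ ≤ 3 := inv_le_of_inv_le₀ (by norm_num) (by linarith)
  calc |heatK t (gMul y x)| ≤ (y.2.2 * x.2.2)⁻¹ * t ^ (-(3 : ℝ) / 2) :=
        abs_heatK_le ht (gMul_pos hy_pos hx)
    _ ≤ 3 * x.2.2⁻¹ * t ^ (-(3 : ℝ) / 2) := by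
        rw [mul_inv]
        gcongr

lemma gMul_shiftG_mem_R0set_iff {z : G} : gMul (shiftG L) z ∈ R0set ↔ z ∈ RLset L := by
  have h_Icc : z.1 - L ∈ Icc (-1 : ℝ) 1 ↔ z.1 ∈ Icc (L - 1) (L + 1) := by
    rw [sub_mem_Icc_iff_left, neg_add_eq_sub, add_comm]
  simp only [R0set, RLset, mem_prod, gMul, shiftG, one_mul, zero_add, neg_add_eq_sub, h_Icc]

lemma fL_eq_indicator_sub (L : ℝ) (z : G) :
    fL L z = R0set.indicator (fun _ => 1) (gMul (shiftG L) z) -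
      R0set.indicator (fun _ => 1) z := by
  have h_mem := gMul_shiftG_mem_R0set_iff (L := L) (z := z)
  by_cases hz : z ∈ RLset L <;> simp [fL, hz, h_mem]

lemma convHeat_fL_eq_setIntegral (L : ℝ) (ht : 0 < t) (hx : 0 < x.2.2) :
    convHeat (fL L) t x = ∫ y in gInv ⁻¹' R0set,
      (heatK t (gMul y (gMul (shiftG L) x)) - heatK t (gMul y x)) ∂ρG := by
  have h_int {z : G} (hz : 0 < z.2.2) := integrableOn_heatK_gMul_right ht hz
  have hx_shift := shiftG_gMul_pos L hx
  rw [integral_sub (h_int hx_shift) (h_int hx), ← convHeat_indicator measurableSet_R0set t hx,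
    ← convHeat_indicator measurableSet_R0set t hx_shift, convHeat, convHeat, convHeat,
    ← integral_sub
      (integrable_indicator_mul_heatK measurableSet_R0set hx_shift (h_int hx_shift))
      (integrable_indicator_mul_heatK measurableSet_R0set hx (h_int hx))]
  simp only [fL_eq_indicator_sub, gMul_assoc, sub_mul]

lemma abs_convHeat_fL_le (ht : 0 < t) (hL : 2 ≤ L) (hx : 0 < x.2.2) (hr : 16 * log L ≤ rG x) :
    |convHeat (fL L) t x| ≤ 3 * 10 ^ 7 * decayBound L x * ρG.real (gInv ⁻¹' R0set) := by
  rw [convHeat_fL_eq_setIntegral L ht hx, ← Real.norm_eq_abs]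
  exact norm_setIntegral_le_of_norm_le_const ρG_preimage_gInv_R0set_lt_top
    fun _ hy => abs_heatK_gMul_shiftG_sub_le ht hL hx hr hy

end Convolution

theorem fL_conv_heat_far_bound_general :
    ∃ C > (0 : ℝ), ∀ L ≥ (2 : ℝ), ∀ x : G, 0 < x.2.2 →
      16 * Real.log L ≤ rG x → ∀ t > (0 : ℝ),
        |convHeat (fL L) t x| ≤
          C * (L ^ 3 / x.2.2 ^ 2) * (rG x)⁻¹ ^ 2 * (Real.sinh (rG x))⁻¹ ^ 2 *
            (L + normG x) := by
  refine ⟨3 * 10 ^ 7 * (ρG.real (gInv ⁻¹' R0set) + 1), by positivity,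
    fun L hL x hx hr t ht => (abs_convHeat_fL_le ht hL hx hr).trans ?_⟩
  have h_norm : 0 ≤ normG x := sqrt_nonneg _
  have h_decay : 0 ≤ decayBound L x := by
    unfold decayBound
    positivity
  calc 3 * 10 ^ 7 * decayBound L x * ρG.real (gInv ⁻¹' R0set)
      ≤ 3 * 10 ^ 7 * decayBound L x * (ρG.real (gInv ⁻¹' R0set) + 1) := by gcongr; linarith
    _ = _ := by unfold decayBound; ring

theorem fL_conv_heat_far_bound :
    ∀ α > (2 : ℝ), ∃ C > (0 : ℝ), ∃ L₀ > (2 : ℝ), ∀ L ≥ L₀, ∀ x : G, 0 < x.2.2 →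
      Real.log L ^ α ≤ rG x → ∀ t > (0 : ℝ),
        |convHeat (fL L) t x| ≤
          C * (L ^ 3 / x.2.2 ^ 2) * (rG x)⁻¹ ^ 2 * (Real.sinh (rG x))⁻¹ ^ 2 *
            (L + normG x) := by
  intro α hα
  obtain ⟨C, hC, h_bound⟩ := fL_conv_heat_far_bound_general
  have h_exp : 2 < exp 16 := by linarith [add_one_le_exp 16]
  exact ⟨C, hC, exp 16, h_exp, fun L hL x hx hr => h_bound L (h_exp.le.trans hL) x hx
    ((mul_log_le_log_rpow (by norm_num) hα.le hL).trans hr)⟩
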